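/- Let γ ≥ 0, v₀ > 0, V₀ > 0, and let s : [0,∞) → ℝ satisfy s(τ) − s(t) ≥ v₀(t−τ) and s(τ) − s(t) ≤ V₀(t−τ) for 0 ≤ τ ≤ t (front moving left). Fix t > 0 and x < s(t). Then |∫_0^t e^{−γ(t−τ)} · exp(−(x−s(τ))²/(4(t−τ)))/√(4π(t−τ)) · V₀ dτ| ≤ (V₀/√(v₀²+4γ)) · exp(−v₀|x−s(t)|/2 − |x−s(t)|²/(4t)). -/

import Mathlib

open Real MeasureTheory

/-!
With `d = |x - s t|` and elapsed time `u = t - τ`, the front at time `τ` is at distance at least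
`d + v₀ u` from `x`, and
`(d + v₀ u)² / (4u) = d² / (4u) + v₀ d / 2 + v₀² u / 4 ≥ d² / (4t) + v₀ d / 2 + v₀² u / 4`.
The first two terms give the spatial decay. The last one adds `v₀² / 4` to the damping rate `γ`,
and integrating the remaining `exp (-(v₀² / 4 + γ) u) / √(4πu)` over all `u > 0` gives the factor
`1 / √(v₀² + 4γ)`.
-/

/-- The one-dimensional heat kernel at elapsed time `u` and displacement `y`, i.e. the
fundamental solution of `∂K/∂u = ∂²K/∂y²`. It is meant for `u > 0`; at `u ≤ 0` the division by
`√(4πu) = 0` makes it `0`. -/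
noncomputable def heatKernel (u y : ℝ) : ℝ :=
  exp (-y ^ 2 / (4 * u)) / √(4 * π * u)

lemma heatKernel_nonneg (u y : ℝ) : 0 ≤ heatKernel u y := by
  unfold heatKernel
  positivity

section PointwiseBound

variable {u t d v y : ℝ}

lemma add_le_sq_div_four_mul (hu : 0 < u) (hut : u ≤ t) (hd : 0 ≤ d) (hv : 0 ≤ v)
    (hy : d + v * u ≤ |y|) :
    d ^ 2 / (4 * t) + v * d / 2 + v ^ 2 / 4 * u ≤ y ^ 2 / (4 * u) :=
  calc d ^ 2 / (4 * t) + v * d / 2 + v ^ 2 / 4 * u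
      ≤ d ^ 2 / (4 * u) + v * d / 2 + v ^ 2 / 4 * u := by gcongr
    _ = (d + v * u) ^ 2 / (4 * u) := by field_simp; ring
    _ ≤ |y| ^ 2 / (4 * u) := by gcongr
    _ = y ^ 2 / (4 * u) := by rw [sq_abs]

lemma exp_mul_heatKernel_le (γ : ℝ) (hu : 0 < u) (hut : u ≤ t) (hd : 0 ≤ d) (hv : 0 ≤ v)
    (hy : d + v * u ≤ |y|) :
    exp (-γ * u) * heatKernel u y ≤
      exp (-(v * d) / 2 - d ^ 2 / (4 * t)) *
        (exp (-((v ^ 2 / 4 + γ) * u)) / √(4 * π * u)) := by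
  have exponent_le : -γ * u + -y ^ 2 / (4 * u) ≤
      -(v * d) / 2 - d ^ 2 / (4 * t) + -((v ^ 2 / 4 + γ) * u) := by
    rw [neg_div (4 * u)]
    linarith [add_le_sq_div_four_mul hu hut hd hv hy]
  rw [heatKernel, ← mul_div_assoc, ← mul_div_assoc, ← exp_add, ← exp_add]
  gcongr

end PointwiseBound

section LaplaceTransform

variable {a t u : ℝ}

lemma exp_div_sqrt_eq_rpow_mul_exp (hu : 0 < u) :
    exp (-(a * u)) / √(4 * π * u) =
      (√(4 * π))⁻¹ * (u ^ ((1 : ℝ) / 2 - 1) * exp (-(a * u))) := by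
  have rpow_eq : u ^ ((1 : ℝ) / 2 - 1) = (√u)⁻¹ := by
    rw [sqrt_eq_rpow, ← rpow_neg hu.le]
    norm_num
  rw [rpow_eq, sqrt_mul (by positivity), div_eq_mul_inv, mul_inv]
  ring

lemma integrableOn_exp_div_sqrt_Ioi (ha : 0 < a) :
    IntegrableOn (fun u ↦ exp (-(a * u)) / √(4 * π * u)) (Set.Ioi 0) := by
  have gamma_integrable :
      IntegrableOn (fun u : ℝ ↦ u ^ ((1 : ℝ) / 2 - 1) * exp (-(a * u))) (Set.Ioi 0) := by
    simpa only [rpow_one, neg_mul] using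
      integrableOn_rpow_mul_exp_neg_mul_rpow (p := 1) (s := (1 : ℝ) / 2 - 1) (by norm_num)
        one_pos ha
  exact IntegrableOn.congr_fun (gamma_integrable.const_mul _)
    (fun _ hu ↦ (exp_div_sqrt_eq_rpow_mul_exp hu).symm) measurableSet_Ioi

lemma integral_exp_div_sqrt_Ioi (ha : 0 < a) :
    ∫ u in Set.Ioi 0, exp (-(a * u)) / √(4 * π * u) = 1 / √(4 * a) := by
  rw [setIntegral_congr_fun measurableSet_Ioi fun _ hu ↦ exp_div_sqrt_eq_rpow_mul_exp hu,
    integral_const_mul, integral_rpow_mul_exp_neg_mul_Ioi one_half_pos ha, Gamma_one_half_eq,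
    ← sqrt_eq_rpow, ← sqrt_mul (by positivity), ← sqrt_inv, ← sqrt_mul (by positivity),
    one_div √_, ← sqrt_inv]
  congr 1
  field_simp

lemma intervalIntegrable_exp_div_sqrt (ha : 0 < a) (ht : 0 ≤ t) :
    IntervalIntegrable (fun u ↦ exp (-(a * u)) / √(4 * π * u)) volume 0 t :=
  (intervalIntegrable_iff_integrableOn_Ioc_of_le ht).2
    ((integrableOn_exp_div_sqrt_Ioi ha).mono_set Set.Ioc_subset_Ioi_self)

lemma intervalIntegral_exp_div_sqrt_le (ha : 0 < a) (ht : 0 ≤ t) :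
    ∫ u in 0..t, exp (-(a * u)) / √(4 * π * u) ≤ 1 / √(4 * a) := by
  rw [intervalIntegral.integral_of_le ht, ← integral_exp_div_sqrt_Ioi ha]
  exact setIntegral_mono_set (integrableOn_exp_div_sqrt_Ioi ha)
    (.of_forall fun _ ↦ by positivity) Set.Ioc_subset_Ioi_self.eventuallyLE

end LaplaceTransform

lemma abs_integral_exp_mul_heatKernel_le {γ v d t : ℝ} {y : ℝ → ℝ} (hγ : 0 < v ^ 2 + 4 * γ)
    (hv : 0 ≤ v) (hd : 0 ≤ d) (ht : 0 ≤ t) (hy : ∀ u ∈ Set.Ioc 0 t, d + v * u ≤ |y u|) :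
    |∫ u in 0..t, exp (-γ * u) * heatKernel u (y u)| ≤
      exp (-(v * d) / 2 - d ^ 2 / (4 * t)) / √(v ^ 2 + 4 * γ) := by
  set E := exp (-(v * d) / 2 - d ^ 2 / (4 * t))
  set a := v ^ 2 / 4 + γ with ha_def
  have ha : 0 < a := by linarith
  have integrand_le (u : ℝ) (hu : u ∈ Set.Ioc 0 t) :
      ‖exp (-γ * u) * heatKernel u (y u)‖ ≤ E * (exp (-(a * u)) / √(4 * π * u)) := by
    rw [norm_of_nonneg (mul_nonneg (exp_nonneg _) (heatKernel_nonneg _ _))]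
    exact exp_mul_heatKernel_le γ hu.1 hu.2 hd hv (hy u hu)
  calc |∫ u in 0..t, exp (-γ * u) * heatKernel u (y u)|
      ≤ ∫ u in 0..t, E * (exp (-(a * u)) / √(4 * π * u)) :=
        intervalIntegral.norm_integral_le_of_norm_le ht (.of_forall integrand_le)
          ((intervalIntegrable_exp_div_sqrt ha ht).const_mul E)
    _ = E * ∫ u in 0..t, exp (-(a * u)) / √(4 * π * u) :=
        intervalIntegral.integral_const_mul _ _
    _ ≤ E * (1 / √(4 * a)) := by
        gcongr
        exact intervalIntegral_exp_div_sqrt_le ha ht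
    _ = E / √(v ^ 2 + 4 * γ) := by
        rw [mul_one_div, ha_def, mul_add, mul_div_cancel₀ _ four_ne_zero]

lemma abs_sub_add_le_abs_sub {x p q r : ℝ} (hx : x ≤ p) (hr : r ≤ q - p) :
    |x - p| + r ≤ |x - q| := by
  rw [abs_of_nonpos (sub_nonpos.2 hx)]
  linarith [neg_le_abs (x - q)]

theorem ahead_of_front_decay_general {γ v₀ V₀ t x : ℝ} {s : ℝ → ℝ}
    (hγ : 0 < v₀ ^ 2 + 4 * γ) (hv₀ : 0 ≤ v₀) (hV₀ : 0 ≤ V₀)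
    (hs : ∀ τ t : ℝ, 0 ≤ τ → τ ≤ t → v₀ * (t - τ) ≤ s τ - s t)
    (ht : 0 < t) (hx : x ≤ s t) :
    |∫ τ in 0..t, exp (-γ * (t - τ)) * heatKernel (t - τ) (x - s τ) * V₀| ≤
      V₀ / √(v₀ ^ 2 + 4 * γ) * exp (-(v₀ * |x - s t|) / 2 - |x - s t| ^ 2 / (4 * t)) := by
  have elapsed_time : ∫ τ in 0..t, exp (-γ * (t - τ)) * heatKernel (t - τ) (x - s τ) =
      ∫ u in 0..t, exp (-γ * u) * heatKernel u (x - s (t - u)) := by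
    simpa only [sub_sub_cancel, sub_self, sub_zero] using
      intervalIntegral.integral_comp_sub_left (a := 0) (b := t)
        (fun u ↦ exp (-γ * u) * heatKernel u (x - s (t - u))) t
  have distance_ge (u : ℝ) (hu : u ∈ Set.Ioc 0 t) :
      |x - s t| + v₀ * u ≤ |x - s (t - u)| := by
    have front_advance := hs (t - u) t (sub_nonneg.2 hu.2) (sub_le_self t hu.1.le)
    rw [sub_sub_cancel] at front_advance
    exact abs_sub_add_le_abs_sub hx front_advance
  rw [intervalIntegral.integral_mul_const, elapsed_time, abs_mul, abs_of_nonneg hV₀, mul_comm,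
    div_mul_eq_mul_div, mul_div_assoc]
  gcongr
  exact abs_integral_exp_mul_heatKernel_le hγ hv₀ (abs_nonneg _) ht.le distance_ge

theorem ahead_of_front_decay (γ v₀ V₀ : ℝ) (hγ : 0 ≤ γ) (hv₀ : 0 < v₀) (hV₀ : 0 < V₀)
    (s : ℝ → ℝ)
    (hs_lower : ∀ τ t : ℝ, 0 ≤ τ → τ ≤ t → v₀ * (t - τ) ≤ s τ - s t)
    (hs_upper : ∀ τ t : ℝ, 0 ≤ τ → τ ≤ t → s τ - s t ≤ V₀ * (t - τ))
    (t x : ℝ) (ht : 0 < t) (hx : x < s t) :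
    |∫ τ in (0:ℝ)..t,
        Real.exp (-γ * (t - τ)) *
          (Real.exp (-(x - s τ) ^ 2 / (4 * (t - τ))) / Real.sqrt (4 * Real.pi * (t - τ))) * V₀|
      ≤ (V₀ / Real.sqrt (v₀ ^ 2 + 4 * γ)) *
          Real.exp (-(v₀ * |x - s t|) / 2 - |x - s t| ^ 2 / (4 * t)) :=
  ahead_of_front_decay_general (by positivity) hv₀.le hV₀.le hs_lower ht hx.le
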